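/- arXiv:2402.07882 — 2 statements merged into one kernel-verified Lean document; each statement's English description precedes it below -/
import Mathlib

section
/- The following are equivalent: (i) there exist an F-vector space U of dimension 7, a hyperplane H of U, a nondegenerate quadratic form Q on H of Witt defect 0 (a Klein quadric Q⁺(5,q)), a generator Π of Q (a plane), and a hyperbolic avsp for (U, H, Q, Π) (i.e., a hyperbolic affine spread of PG(6,q)); (ii) there exist an F-vector space V of dimension 8 and a nondegenerate quadratic form Q' on V of Witt defect 0 (a triality quadric Q⁺(7,q)) admitting a spread. -/
open Module Submodule

section Defs

variable {F : Type*} [Field F] {V : Type*} [AddCommGroup V] [Module F V]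

/-- A subspace is totally singular if the quadratic form vanishes on it. -/
def IsTotallySingular (Q : QuadraticForm F V) (W : Submodule F V) : Prop :=
  ∀ x ∈ W, Q x = 0

/-- The Witt index: maximal dimension of a totally singular subspace. -/
noncomputable def wittIndex (Q : QuadraticForm F V) : ℕ :=
  sSup {n : ℕ | ∃ W : Submodule F V, IsTotallySingular Q W ∧ Module.finrank F ↥W = n}

/-- Nondegeneracy: the only singular vector orthogonal to everything is `0`. -/
def QuadNondeg (Q : QuadraticForm F V) : Prop :=
  ∀ v : V, Q v = 0 → (∀ x : V, QuadraticMap.polar Q v x = 0) → v = 0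

/-- A generator: totally singular subspace of dimension the Witt index. -/
def IsGenerator (Q : QuadraticForm F V) (G : Submodule F V) : Prop :=
  IsTotallySingular Q G ∧ Module.finrank F ↥G = wittIndex Q

/-- A spread of `Q`. -/
def IsSpread (Q : QuadraticForm F V) (S : Set (Submodule F V)) : Prop :=
  (∀ G ∈ S, IsGenerator Q G) ∧
  (∀ G ∈ S, ∀ G' ∈ S, G ≠ G' → G ⊓ G' = ⊥) ∧
  (∀ v : V, Q v = 0 → ∃ G ∈ S, v ∈ G)

/-- The perp of a vector with respect to the polar form of `Q`. -/
def vecPerp (Q : QuadraticForm F V) (u : V) : Submodule F V :=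
  LinearMap.ker (QuadraticMap.polarBilin Q u)

/-- The perp of a subspace with respect to the polar form of `Q`. -/
def subPerp (Q : QuadraticForm F V) (G : Submodule F V) : Submodule F V :=
  ⨅ g ∈ G, vecPerp Q g

/-- Hyperbolic (e = 0), parabolic (e = 1) or elliptic (e = 2) affine vector space
partition for `(U, H, Q, Pgen)`. -/
def IsAvsp [Fintype F] (e r : ℕ) {U : Type*} [AddCommGroup U] [Module F U]
    (H : Submodule F U) (Q : QuadraticForm F ↥H) (Pgen : Submodule F ↥H)
    (P : Set (Submodule F U)) : Prop :=
  P.ncard = Fintype.card F ^ ((r + e + 1) / 2) ∧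
  (∀ S ∈ P, Module.finrank F ↥S = (r + 3 - e) / 2 ∧ ¬ S ≤ H) ∧
  (∀ L : Submodule F U, Module.finrank F ↥L = 1 → ¬ L ≤ H → ∃! S, S ∈ P ∧ L ≤ S) ∧
  (∀ S ∈ P, IsGenerator Q (S.comap H.subtype) ∧ S.comap H.subtype ⊓ Pgen = ⊥) ∧
  (∀ S ∈ P, ∀ T ∈ P, S ≠ T → S.comap H.subtype ≠ T.comap H.subtype) ∧
  (∀ S ∈ P, ∀ T ∈ P, S ≠ T → Module.finrank F ↥(S ⊓ T) ≤ 1) ∧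
  (∀ S ∈ P, ∀ T ∈ P, S ≠ T →
    Module.finrank F ↥(S.comap H.subtype ⊓ T.comap H.subtype) = 1 →
      QuadNondeg (Q.comp ((S ⊔ T).comap H.subtype).subtype) ∧
      Module.finrank F ↥((S ⊔ T).comap H.subtype) =
        2 * wittIndex (Q.comp ((S ⊔ T).comap H.subtype).subtype))

end Defs

/-!
Fix a nonzero singular vector `u` of the larger quadric. Splitting off `u` puts the form in the
shape `Q x + l x * a` on `U × F` with `u = (0, 1)`, and `u^⊥ / u` carries the restriction of `Q`
to the hyperplane `H = l.ker`.

Projecting from `u` matches the generators `G` missing `u` with the subspaces `S ⊄ H` of `U` whose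
trace on `H` is a generator: where `l x ≠ 0`, the last coordinate of a singular vector over `x` is
`-Q x / l x`, and this is linear on `S`. The generators through `u` are the products `W × F` with
`W` a generator of `H`. Hence a spread gives a partition of the points off `H` by the projections
of its members missing `u`, and the member through `u` gives `W`.

Let `G` and `G'` miss `u`. If they are disjoint, their projections meet in dimension at most one,
with equality exactly when `u ∈ G ⊔ G'`; in that case the trace on `H` of the sum of the
projections is nondegenerate because `G ⊔ G'` is. Conversely, if they meet in `v ≠ 0` and the
projections share no vector off `H`, then the image of `v` lies in the radical of that trace.

So the conditions of an affine spread say that the lifted generators are pairwise disjoint; for `H`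
of Witt index `k` and Witt defect `e` there are `q ^ (k + e)` of them besides `W × F`, just enough
to cover all singular vectors.
-/

section LinearAlgebra

variable {F V W : Type*} [Field F] [AddCommGroup V] [Module F V]
  [AddCommGroup W] [Module F W]

theorem exists_mem_apply_eq_one {l : V →ₗ[F] F} {S : Submodule F V} (hS : ¬ S ≤ l.ker) :
    ∃ s ∈ S, l s = 1 := by
  obtain ⟨t, htS, ht⟩ := SetLike.not_le_iff_exists.1 hS
  rw [LinearMap.mem_ker] at ht
  exact ⟨(l t)⁻¹ • t, S.smul_mem _ htS, by simp [ht]⟩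

theorem forall_line_existsUnique_iff {H : Submodule F V} {P : Set (Submodule F V)} :
    (∀ L : Submodule F V, finrank F L = 1 → ¬ L ≤ H → ∃! S, S ∈ P ∧ L ≤ S) ↔
      ∀ x ∉ H, ∃! S, S ∈ P ∧ x ∈ S := by
  refine ⟨fun h x hx ↦ ?_, fun h L hL hLH ↦ ?_⟩
  · have hx0 : x ≠ 0 := fun h0 ↦ hx (h0 ▸ H.zero_mem)
    simpa using h (F ∙ x) (finrank_span_singleton hx0) (by simpa using hx)
  · have := Module.finite_of_finrank_eq_succ hL
    obtain ⟨x, hxL, hx⟩ := SetLike.not_le_iff_exists.1 hLH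
    have hx0 : x ≠ 0 := fun h0 ↦ hx (h0 ▸ H.zero_mem)
    have hspan : F ∙ x = L := eq_of_le_of_finrank_eq (by simpa using hxL)
      (by rw [finrank_span_singleton hx0, hL])
    simpa [← hspan] using h x hx

variable [FiniteDimensional F V]

theorem finrank_map_add_finrank_ker_inf (f : V →ₗ[F] W) (S : Submodule F V) :
    finrank F (S.map f) + finrank F (f.ker ⊓ S : Submodule F V) = finrank F S := by
  have h := (f.domRestrict S).finrank_range_add_finrank_ker
  rwa [LinearMap.range_domRestrict, LinearMap.ker_domRestrict,
    ← finrank_map_subtype_eq S (f.ker.comap _), map_comap_subtype, inf_comm] at h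

theorem finrank_le_finrank_ker_inf_add_one (l : V →ₗ[F] F) (S : Submodule F V) :
    finrank F S ≤ finrank F (l.ker ⊓ S : Submodule F V) + 1 := by
  have h := finrank_map_add_finrank_ker_inf l S
  have hF := (S.map l).finrank_le
  rw [finrank_self] at hF
  omega

theorem finrank_ker_inf_add_one {l : V →ₗ[F] F} {S : Submodule F V} (hS : ¬ S ≤ l.ker) :
    finrank F (l.ker ⊓ S : Submodule F V) + 1 = finrank F S := by
  refine le_antisymm (finrank_lt_finrank_of_lt ?_) (finrank_le_finrank_ker_inf_add_one l S)
  exact lt_of_le_of_ne inf_le_right fun h ↦ hS (inf_eq_right.1 h)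

theorem finrank_prod_top (W : Submodule F V) :
    finrank F (W.prod (⊤ : Submodule F F) : Submodule F (V × F)) = finrank F W + 1 := by
  have hrange : (W.subtype.prodMap LinearMap.id).range = W.prod (⊤ : Submodule F F) := by
    rw [LinearMap.range_prodMap, range_subtype, LinearMap.range_id]
  rw [← hrange, LinearMap.finrank_range_of_inj (W.subtype_injective.prodMap Function.injective_id),
    finrank_prod, finrank_self]

theorem exists_linearEquiv_prod_apply_eq [FiniteDimensional F W]
    (hdim : finrank F W = finrank F V + 1) {u : W} (hu : u ≠ 0) :
    ∃ e : (V × F) ≃ₗ[F] W, e (0, 1) = u := by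
  obtain ⟨C, hC⟩ := Submodule.exists_isCompl (F ∙ u)
  have h := finrank_add_eq_of_isCompl hC
  rw [finrank_span_singleton hu] at h
  refine ⟨((LinearEquiv.ofFinrankEq V C (by omega)).prodCongr
    (LinearEquiv.toSpanNonzeroSingleton F W u hu)).trans
      (prodEquivOfIsCompl C (F ∙ u) hC.symm), ?_⟩
  simp

end LinearAlgebra

section QuadraticForms

variable {F V W : Type*} [Field F] [AddCommGroup V] [Module F V] [AddCommGroup W] [Module F W]
  {Q : QuadraticForm F V} {G G' : Submodule F V}

theorem mem_subPerp {v : V} : v ∈ subPerp Q G ↔ ∀ g ∈ G, QuadraticMap.polar Q g v = 0 := by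
  simp [subPerp, vecPerp]

theorem isTotallySingular_comp_iff {f : W →ₗ[F] V} {S : Submodule F W} :
    IsTotallySingular (Q.comp f) S ↔ IsTotallySingular Q (S.map f) := by
  simp [IsTotallySingular]

theorem IsTotallySingular.polar_eq_zero (hG : IsTotallySingular Q G) {x y : V} (hx : x ∈ G)
    (hy : y ∈ G) : QuadraticMap.polar Q x y = 0 := by
  simp [QuadraticMap.polar, hG _ (G.add_mem hx hy), hG _ hx, hG _ hy]

theorem IsTotallySingular.le_subPerp (hG : IsTotallySingular Q G) : G ≤ subPerp Q G :=
  fun _ hv ↦ mem_subPerp.2 fun _ hg ↦ hG.polar_eq_zero hg hv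

theorem IsTotallySingular.sup_span_singleton (hG : IsTotallySingular Q G) {v : V} (hv : Q v = 0)
    (hvG : v ∈ subPerp Q G) : IsTotallySingular Q (G ⊔ F ∙ v) := by
  intro x hx
  obtain ⟨g, hg, _, hw, rfl⟩ := mem_sup.1 hx
  obtain ⟨c, rfl⟩ := mem_span_singleton.1 hw
  rw [QuadraticMap.map_add Q, QuadraticMap.map_smul, QuadraticMap.polar_smul_right, hG g hg, hv,
    mem_subPerp.1 hvG g hg]
  simp

theorem QuadNondeg.comp_equiv (hQ : QuadNondeg Q) (e : W ≃ₗ[F] V) :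
    QuadNondeg (Q.comp (e : W →ₗ[F] V)) := by
  intro v hv hp
  refine e.map_eq_zero_iff.1 (hQ _ (by simpa using hv) fun x ↦ ?_)
  simpa [QuadraticMap.polar] using hp (e.symm x)

theorem wittIndex_comp_equiv (Q : QuadraticForm F V) (e : W ≃ₗ[F] V) :
    wittIndex (Q.comp (e : W →ₗ[F] V)) = wittIndex Q := by
  refine congrArg sSup (Set.ext fun n ↦
    (orderIsoMapComap e).toEquiv.exists_congr fun S ↦ ?_)
  rw [isTotallySingular_comp_iff, ← LinearEquiv.finrank_map_eq e S]
  rfl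

theorem isGenerator_comp_equiv_iff {e : W ≃ₗ[F] V} {S : Submodule F W} :
    IsGenerator (Q.comp (e : W →ₗ[F] V)) S ↔ IsGenerator Q (S.map (e : W →ₗ[F] V)) := by
  rw [IsGenerator, IsGenerator, isTotallySingular_comp_iff, wittIndex_comp_equiv,
    LinearEquiv.finrank_map_eq]

theorem IsSpread.comp_equiv {R : Set (Submodule F V)} (hR : IsSpread Q R) (e : W ≃ₗ[F] V) :
    IsSpread (Q.comp (e : W →ₗ[F] V)) (Submodule.map (e : W →ₗ[F] V) ⁻¹' R) := by
  obtain ⟨hgen, hdisj, hcov⟩ := hR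
  refine ⟨fun S hS ↦ isGenerator_comp_equiv_iff.2 (hgen _ hS), fun S hS S' hS' hne ↦ ?_,
    fun v hv ↦ ?_⟩
  · have h := hdisj _ hS _ hS' ((map_injective_of_injective e.injective).ne hne)
    rwa [← map_inf _ e.injective, Submodule.map_eq_bot_iff] at h
  · obtain ⟨G, hG, hvG⟩ := hcov (e v) hv
    refine ⟨G.comap (e : W →ₗ[F] V), ?_, hvG⟩
    rwa [Set.mem_preimage, map_comap_eq_of_surjective e.surjective]

theorem quadNondeg_restrict_iff {H : Submodule F V} :
    QuadNondeg (Q.restrict H) ↔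
      ∀ x ∈ H, Q x = 0 → (∀ y ∈ H, QuadraticMap.polar Q x y = 0) → x = 0 := by
  refine ⟨fun h x hx hQx hp ↦ congrArg Subtype.val (h ⟨x, hx⟩ hQx fun y ↦ hp y y.2),
    fun h x hQx hp ↦ Subtype.ext (h x x.2 hQx fun y hy ↦ hp ⟨y, hy⟩)⟩

theorem isGenerator_restrict_comap_iff {H : Submodule F V} :
    IsGenerator (Q.restrict H) (G.comap H.subtype) ↔
      IsTotallySingular Q (H ⊓ G) ∧
        finrank F (H ⊓ G : Submodule F V) = wittIndex (Q.restrict H) := by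
  rw [← map_comap_subtype, finrank_map_subtype_eq, ← isTotallySingular_comp_iff]
  rfl

variable [FiniteDimensional F V]

theorem exists_ker_eq_and_restrict_eq {H : Submodule F V} (hH : finrank F H + 1 = finrank F V)
    (Q : QuadraticForm F H) :
    ∃ (l : V →ₗ[F] F) (Q₀ : QuadraticForm F V), l ≠ 0 ∧ l.ker = H ∧ Q₀.restrict H = Q := by
  have hlt : H < ⊤ := lt_top_iff_ne_top.2 fun h ↦ by
    rw [h, finrank_top] at hH
    omega
  obtain ⟨l, hl, hle⟩ := exists_le_ker_of_lt_top H hlt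
  obtain ⟨p, hp⟩ := LinearMap.exists_leftInverse_of_injective H.subtype H.ker_subtype
  have hker := Module.Dual.finrank_ker_add_one_of_ne_zero hl
  refine ⟨l, Q.comp p, hl, (eq_of_le_of_finrank_eq hle (by omega)).symm, ?_⟩
  exact QuadraticMap.ext fun x ↦ congrArg Q (LinearMap.congr_fun hp x)

theorem bddAbove_finrank_isTotallySingular (Q : QuadraticForm F V) :
    BddAbove {n : ℕ | ∃ G : Submodule F V, IsTotallySingular Q G ∧ finrank F G = n} :=
  ⟨finrank F V, by rintro _ ⟨G, -, rfl⟩; exact G.finrank_le⟩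

theorem IsTotallySingular.finrank_le_wittIndex (hG : IsTotallySingular Q G) :
    finrank F G ≤ wittIndex Q :=
  le_csSup (bddAbove_finrank_isTotallySingular Q) ⟨G, hG, rfl⟩

theorem exists_isGenerator (Q : QuadraticForm F V) : ∃ G, IsGenerator Q G :=
  Nat.sSup_mem (s := {n : ℕ | ∃ G : Submodule F V, IsTotallySingular Q G ∧ finrank F G = n})
    ⟨0, ⊥, by simp [IsTotallySingular], by simp⟩ (bddAbove_finrank_isTotallySingular Q)

theorem exists_ne_zero_of_wittIndex_pos (h : 0 < wittIndex Q) : ∃ u ≠ 0, Q u = 0 := by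
  obtain ⟨G, hG⟩ := exists_isGenerator Q
  obtain ⟨u, hu, hu0⟩ := exists_mem_ne_zero_of_ne_bot (one_le_finrank_iff.1 (hG.2 ▸ h))
  exact ⟨u, hu0, hG.1 u hu⟩

theorem IsTotallySingular.finrank_le_wittIndex_restrict (hG : IsTotallySingular Q G)
    {H : Submodule F V} (hGH : G ≤ H) : finrank F G ≤ wittIndex (Q.restrict H) := by
  rw [← (submoduleOfEquivOfLe hGH).finrank_eq]
  exact IsTotallySingular.finrank_le_wittIndex fun x hx ↦ hG x hx

theorem IsGenerator.mem_of_mem_subPerp (hG : IsGenerator Q G) {v : V} (hv : Q v = 0)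
    (hvG : v ∈ subPerp Q G) : v ∈ G := by
  have hle := (hG.1.sup_span_singleton hv hvG).finrank_le_wittIndex
  rw [← hG.2] at hle
  rw [eq_of_le_of_finrank_le le_sup_left hle]
  exact mem_sup_right (mem_span_singleton_self v)

theorem IsGenerator.sup_inf_subPerp_eq_bot (hG : IsGenerator Q G) (hG' : IsGenerator Q G')
    (hdisj : G ⊓ G' = ⊥) : (G ⊔ G') ⊓ subPerp Q (G ⊔ G') = ⊥ := by
  rw [eq_bot_iff]
  rintro v ⟨hv, hp⟩
  obtain ⟨g, hg, g', hg', rfl⟩ := mem_sup.1 hv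
  replace hp := mem_subPerp.1 hp
  have hg'G : g' ∈ G := hG.mem_of_mem_subPerp (hG'.1 g' hg') <| mem_subPerp.2 fun h hh ↦ by
    simpa [QuadraticMap.polar_add_right, hG.1.polar_eq_zero hh hg] using hp h (mem_sup_left hh)
  have hgG' : g ∈ G' := hG'.mem_of_mem_subPerp (hG.1 g hg) <| mem_subPerp.2 fun h hh ↦ by
    simpa [QuadraticMap.polar_add_right, hG'.1.polar_eq_zero hh hg'] using hp h (mem_sup_right hh)
  have hmem : g + g' ∈ G ⊓ G' := ⟨G.add_mem hg hg'G, G'.add_mem hgG' hg'⟩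
  rwa [hdisj] at hmem

theorem QuadNondeg.finrank_add_finrank_subPerp (hQ : QuadNondeg Q) (hG : IsTotallySingular Q G) :
    finrank F G + finrank F (subPerp Q G) = finrank F V := by
  have hperp : subPerp Q G = G.orthogonalBilin Q.polarBilin := by
    ext v
    simp [mem_subPerp]
  have hrad : G ⊓ LinearMap.ker Q.polarBilin = ⊥ := by
    rw [eq_bot_iff]
    exact fun v hv ↦ hQ v (hG v hv.1) fun x ↦ by simpa using LinearMap.congr_fun hv.2 x
  have h := LinearMap.BilinForm.finrank_add_finrank_orthogonal' (B := Q.polarBilin) G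
  rwa [hrad, finrank_bot, add_zero, LinearMap.BilinForm.orthogonal, ← hperp] at h

theorem QuadNondeg.finrank_eq_two_mul_wittIndex (hQ : QuadNondeg Q) {n : ℕ}
    (hV : finrank F V = 2 * n) (hn : n ≤ wittIndex Q) : finrank F V = 2 * wittIndex Q := by
  obtain ⟨W, hW⟩ := exists_isGenerator Q
  have hadd := hQ.finrank_add_finrank_subPerp hW.1
  have hle := finrank_mono hW.1.le_subPerp
  have hWw := hW.2
  omega

end QuadraticForms

section Counting

variable {F V : Type*} [Field F] [AddCommGroup V] [Module F V]

theorem ncard_iUnion_eq_mul {ι α : Type*} [Finite ι] [Finite α] {s : ι → Set α}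
    (hs : Pairwise (Function.onFun Disjoint s)) {m : ℕ} (hm : ∀ i, (s i).ncard = m) :
    (⋃ i, s i).ncard = Nat.card ι * m := by
  have := Fintype.ofFinite ι
  simp [Set.ncard_iUnion_of_finite (fun i ↦ (s i).toFinite) hs, hm, finsum_eq_sum_of_fintype,
    Nat.card_eq_fintype_card]

theorem ncard_setOf_mem_apply_eq [FiniteDimensional F V] {l : V →ₗ[F] F} {S : Submodule F V}
    (hS : ¬ S ≤ l.ker) (c : F) :
    {x | x ∈ S ∧ l x = c}.ncard = Nat.card F ^ finrank F (l.ker ⊓ S : Submodule F V) := by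
  obtain ⟨s, hs, hls⟩ := exists_mem_apply_eq_one hS
  have htranslate : {x | x ∈ S ∧ l x = c} = (c • s + ·) '' (l.ker ⊓ S : Submodule F V) := by
    ext x
    simp only [Set.image_add_left, Set.mem_preimage, Set.mem_ofPred_eq, SetLike.mem_coe, mem_inf,
      LinearMap.mem_ker, map_add, map_neg, map_smul, hls, smul_eq_mul, mul_one,
      S.add_mem_iff_right (S.neg_mem (S.smul_mem c hs)), neg_add_eq_zero]
    rw [and_comm, eq_comm]
  rw [htranslate, Set.ncard_image_of_injective _ (add_right_injective _),
    ← Module.natCard_eq_pow_finrank, ← Nat.card_coe_set_eq]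
  rfl

theorem ncard_of_affine_partition [Finite F] [FiniteDimensional F V] {l : V →ₗ[F] F} (hl : l ≠ 0)
    {P : Set (Submodule F V)} {k m : ℕ} (hP : ∀ S ∈ P, ¬ S ≤ l.ker)
    (hdim : ∀ S ∈ P, finrank F (l.ker ⊓ S : Submodule F V) = k)
    (hpart : ∀ x ∉ l.ker, ∃! S, S ∈ P ∧ x ∈ S) (hker : finrank F l.ker = k + m) :
    P.ncard = Nat.card F ^ m := by
  have := Module.finite_of_finite F (M := V)
  have hne {x : V} (hx : l x = 1) : x ∉ l.ker := by simp [hx]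
  have hunion : ⋃ S : P, {x | x ∈ S.1 ∧ l x = 1} = {x | x ∈ (⊤ : Submodule F V) ∧ l x = 1} := by
    ext x
    suffices l x = 1 → ∃ S ∈ P, x ∈ S by
      simp only [Set.iUnion_coe_set, Set.mem_iUnion, Set.mem_ofPred_eq, exists_prop, mem_top]
      grind
    exact fun hx ↦ (hpart x (hne hx)).exists
  have hdisj : Pairwise (Function.onFun Disjoint fun S : P ↦ {x | x ∈ S.1 ∧ l x = 1}) := by
    refine fun S T hST ↦ Set.disjoint_left.2 fun x hxS hxT ↦ hST (Subtype.ext ?_)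
    exact (hpart x (hne hxS.2)).unique ⟨S.2, hxS.1⟩ ⟨T.2, hxT.1⟩
  have hcount := ncard_iUnion_eq_mul hdisj (m := Nat.card F ^ k) fun S ↦ by
    rw [ncard_setOf_mem_apply_eq (hP S S.2), hdim S S.2]
  have htop : ¬ (⊤ : Submodule F V) ≤ l.ker := by rwa [top_le_iff, LinearMap.ker_eq_top]
  rw [hunion, ncard_setOf_mem_apply_eq htop, inf_top_eq, hker, pow_add, mul_comm,
    Nat.card_coe_set_eq] at hcount
  exact (Nat.eq_of_mul_eq_mul_right (pow_pos Nat.card_pos k) hcount).symm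

theorem mul_ncard_eq_ncard_of_forall_coset {A : Type*} [AddCommGroup A] [Finite A]
    {G : AddSubgroup A} {s t : Set A} {n : ℕ} (hst : s ⊆ t)
    (ht : ∀ v w, w - v ∈ G → (w ∈ t ↔ v ∈ t))
    (hn : ∀ v ∈ t, n * {w | w - v ∈ G ∧ w ∈ s}.ncard = Nat.card G) : n * s.ncard = t.ncard := by
  classical
  have := Fintype.ofFinite A
  let r (w v : A) : Prop := w - v ∈ G
  have habove (w : A) (hw : w ∈ s.toFinset) :
      (t.toFinset.bipartiteAbove r w).card = Nat.card G := by
    have hcoset : (t.toFinset.bipartiteAbove r w : Set A) = (w - ·) '' G := by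
      ext v
      obtain ⟨g, rfl⟩ : ∃ g, v = w - g := ⟨w - v, by simp⟩
      simp only [r, Finset.coe_bipartiteAbove, Set.mem_toFinset, Set.mem_ofPred_eq, sub_sub_cancel,
        sub_right_injective.mem_set_image, SetLike.mem_coe]
      refine and_iff_right_of_imp fun hg ↦ (ht (w - g) w ?_).1 (hst (by simpa using hw))
      simpa using hg
    rw [← Set.ncard_coe_finset, hcoset, Set.ncard_image_of_injective _ sub_right_injective,
      ← Nat.card_coe_set_eq]
    rfl
  have hbelow (v : A) (hv : v ∈ t.toFinset) :
      n * (s.toFinset.bipartiteBelow r v).card = Nat.card G := by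
    rw [← hn v (by simpa using hv), ← Set.ncard_coe_finset]
    congr
    ext w
    simp [r, and_comm]
  have hcount : n * s.toFinset.card * Nat.card G = t.toFinset.card * Nat.card G := calc
    _ = n * ∑ w ∈ s.toFinset, (t.toFinset.bipartiteAbove r w).card := by
      rw [Finset.sum_congr rfl habove, Finset.sum_const, smul_eq_mul, mul_assoc]
    _ = ∑ v ∈ t.toFinset, n * (s.toFinset.bipartiteBelow r v).card := by
      rw [Finset.sum_card_bipartiteAbove_eq_sum_card_bipartiteBelow, Finset.mul_sum]
    _ = t.toFinset.card * Nat.card G := by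
      rw [Finset.sum_congr rfl hbelow, Finset.sum_const, smul_eq_mul]
  rw [Set.ncard_eq_toFinset_card', Set.ncard_eq_toFinset_card']
  exact Nat.eq_of_mul_eq_mul_right Nat.card_pos hcount

variable {Q : QuadraticForm F V} {G : Submodule F V}

/- On the coset `v + G` the form is `Q v + B(v, g)`, an affine function of `g ∈ G` which is
nonconstant because `v ∉ subPerp Q G`. -/
theorem IsTotallySingular.card_mul_ncard_singular_coset [FiniteDimensional F V]
    (hG : IsTotallySingular Q G) {v : V} (hv : v ∉ subPerp Q G) :
    Nat.card F * {w | w - v ∈ G ∧ Q w = 0}.ncard = Nat.card G := by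
  have htranslate : {w | w - v ∈ G ∧ Q w = 0} =
      (v + ·) '' {g | g ∈ G ∧ Q.polarBilin v g = -Q v} := by
    ext w
    obtain ⟨g, rfl⟩ : ∃ g, w = v + g := ⟨w - v, by simp⟩
    simp only [Set.mem_ofPred_eq, add_sub_cancel_left, (add_right_injective v).mem_set_image,
      and_congr_right_iff]
    intro hg
    rw [QuadraticMap.map_add Q, hG g hg, add_zero, add_comm, add_eq_zero_iff_eq_neg]
    rfl
  have hv' : ¬ G ≤ (Q.polarBilin v).ker := fun hle ↦ hv <| mem_subPerp.2 fun g hg ↦ by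
    simpa [QuadraticMap.polar_comm] using hle hg
  rw [htranslate, Set.ncard_image_of_injective _ (add_right_injective v),
    ncard_setOf_mem_apply_eq hv', ← pow_succ', finrank_ker_inf_add_one hv',
    ← Module.natCard_eq_pow_finrank]

theorem IsTotallySingular.card_mul_ncard_singular_diff_subPerp [Finite F] [FiniteDimensional F V]
    (hG : IsTotallySingular Q G) :
    Nat.card F * ({v | Q v = 0} \ subPerp Q G : Set V).ncard = ((subPerp Q G : Set V)ᶜ).ncard := by
  have := Module.finite_of_finite F (M := V)
  have hmem {v w : V} (h : w - v ∈ G) : w ∈ subPerp Q G ↔ v ∈ subPerp Q G := by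
    rw [← sub_add_cancel w v, (subPerp Q G).add_mem_iff_right (hG.le_subPerp h)]
  refine mul_ncard_eq_ncard_of_forall_coset (G := G.toAddSubgroup) (fun w hw ↦ hw.2)
    (fun v w h ↦ (hmem h).not) fun v hv ↦ Eq.trans ?_ (hG.card_mul_ncard_singular_coset hv)
  congr 2
  ext w
  exact and_congr_right fun h ↦ and_iff_left ((hmem h).not.2 hv)

theorem QuadNondeg.ncard_singular_diff_zero [Finite F] [FiniteDimensional F V]
    (hQ : QuadNondeg Q) {k e : ℕ} (hw : wittIndex Q = k + 1)
    (hV : finrank F V = 2 * (k + 1) + e) :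
    ({v | Q v = 0} \ {0}).ncard = (Nat.card F ^ (k + e) + 1) * (Nat.card F ^ (k + 1) - 1) := by
  have := Module.finite_of_finite F (M := V)
  obtain ⟨G, hG⟩ := exists_isGenerator Q
  have hGk := hG.2.trans hw
  have hperp : finrank F (subPerp Q G) = k + 1 + e := by
    have := hQ.finrank_add_finrank_subPerp hG.1
    omega
  have hcard (S : Submodule F V) : (S : Set V).ncard = Nat.card F ^ finrank F S := by
    rw [← Module.natCard_eq_pow_finrank, ← Nat.card_coe_set_eq]
    rfl
  have hVcard := Module.natCard_eq_pow_finrank (K := F) (V := V)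
  have hout : ({v | Q v = 0} \ subPerp Q G : Set V).ncard =
      Nat.card F ^ (k + e) * (Nat.card F ^ (k + 1) - 1) := by
    refine Nat.eq_of_mul_eq_mul_left (Nat.card_pos (α := F)) ?_
    rw [hG.1.card_mul_ncard_singular_diff_subPerp, Set.ncard_compl, hVcard, hcard, hperp, hV,
      Nat.mul_sub_one, Nat.mul_sub]
    ring_nf
  have hin : {v | Q v = 0} \ {0} = ({v | Q v = 0} \ subPerp Q G : Set V) ∪ (G \ {0} : Set V) := by
    ext v
    have hv : v ∈ G ↔ Q v = 0 ∧ v ∈ subPerp Q G :=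
      ⟨fun h ↦ ⟨hG.1 v h, hG.1.le_subPerp h⟩, fun h ↦ hG.mem_of_mem_subPerp h.1 h.2⟩
    have := (subPerp Q G).zero_mem
    simp only [Set.mem_sdiff, Set.mem_ofPred_eq, Set.mem_singleton_iff, Set.mem_union,
      SetLike.mem_coe]
    grind
  have hdisj : Disjoint ({v | Q v = 0} \ subPerp Q G : Set V) (G \ {0} : Set V) :=
    Set.disjoint_left.2 fun v hv hvG ↦ hv.2 (hG.1.le_subPerp hvG.1)
  rw [hin, Set.ncard_union_eq hdisj, Set.ncard_sdiff_singleton_of_mem G.zero_mem, hcard, hGk, hout,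
    add_one_mul]

theorem isSpread_range_of_natCard_eq [Finite F] [FiniteDimensional F V] (hQ : QuadNondeg Q)
    {k e : ℕ} (hw : wittIndex Q = k + 1) (hV : finrank F V = 2 * (k + 1) + e)
    {ι : Type*} [Finite ι] (hι : Nat.card ι = Nat.card F ^ (k + e) + 1) {f : ι → Submodule F V}
    (hf : ∀ i, IsGenerator Q (f i)) (hdisj : ∀ i j, i ≠ j → f i ⊓ f j = ⊥) :
    IsSpread Q (Set.range f) := by
  have := Module.finite_of_finite F (M := V)
  have hsub : ⋃ i, (f i \ {0} : Set V) ⊆ {v | Q v = 0} \ {0} :=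
    Set.iUnion_subset fun i ↦ Set.sdiff_subset_sdiff_left fun v hv ↦ (hf i).1 v hv
  have hcard : (⋃ i, (f i \ {0} : Set V)).ncard = ({v | Q v = 0} \ {0}).ncard := by
    rw [hQ.ncard_singular_diff_zero hw hV, ← hι]
    refine ncard_iUnion_eq_mul (fun i j hij ↦ Set.disjoint_left.2 ?_) fun i ↦ ?_
    · rintro v ⟨hvi, hv0⟩ ⟨hvj, -⟩
      have hv : v ∈ f i ⊓ f j := ⟨hvi, hvj⟩
      exact hv0 (by simpa [hdisj i j hij] using hv)
    · rw [Set.ncard_sdiff_singleton_of_mem (f i).zero_mem, ← Nat.card_coe_set_eq, ← hw, ← (hf i).2,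
        ← Module.natCard_eq_pow_finrank]
      rfl
  have hcover := Set.eq_of_subset_of_ncard_le hsub hcard.ge
  have : Nonempty ι := (Nat.card_pos_iff.1 (hι ▸ Nat.succ_pos _)).1
  refine ⟨Set.forall_mem_range.2 hf, ?_, fun v hv ↦ ?_⟩
  · rintro _ ⟨i, rfl⟩ _ ⟨j, rfl⟩ hij
    exact hdisj i j (ne_of_apply_ne f hij)
  rcases eq_or_ne v 0 with rfl | hv0
  · exact ⟨_, Set.mem_range_self (Classical.arbitrary ι), zero_mem _⟩
  · obtain ⟨i, hi, -⟩ := Set.mem_iUnion.1 (hcover.ge ⟨hv, hv0⟩)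
    exact ⟨f i, Set.mem_range_self i, hi⟩

end Counting

section HyperbolicExtension

variable {F U : Type*} [Field F] [AddCommGroup U] [Module F U]
  {Q : QuadraticForm F U} {l : U →ₗ[F] F}

/-- The form `Q x + l x * a` on `U × F`. Its vertex `(0, 1)` is singular with perp `l.ker × F`, and
every quadratic form with a nonzero singular vector has this shape in suitable coordinates. -/
def hyperbolicExt (Q : QuadraticForm F U) (l : U →ₗ[F] F) : QuadraticForm F (U × F) :=
  Q.comp (LinearMap.fst F U F) +
    QuadraticMap.linMulLin (l ∘ₗ LinearMap.fst F U F) (LinearMap.snd F U F)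

@[simp]
theorem hyperbolicExt_apply (v : U × F) : hyperbolicExt Q l v = Q v.1 + l v.1 * v.2 := rfl

theorem polar_hyperbolicExt (v w : U × F) :
    QuadraticMap.polar (hyperbolicExt Q l) v w =
      QuadraticMap.polar Q v.1 w.1 + l v.1 * w.2 + l w.1 * v.2 := by
  simp only [QuadraticMap.polar, hyperbolicExt_apply, Prod.fst_add, Prod.snd_add, map_add]
  ring

theorem exists_eq_hyperbolicExt {Q' : QuadraticForm F (U × F)} (h : Q' (0, 1) = 0) :
    ∃ (Q : QuadraticForm F U) (l : U →ₗ[F] F), Q' = hyperbolicExt Q l := by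
  refine ⟨Q'.comp (LinearMap.inl F U F),
    Q'.polarBilin.flip (0, 1) ∘ₗ LinearMap.inl F U F, QuadraticMap.ext fun v ↦ ?_⟩
  have hv : v = (v.1, 0) + v.2 • ((0, 1) : U × F) := by simp
  conv_lhs => rw [hv, QuadraticMap.map_add Q', QuadraticMap.map_smul, h,
    QuadraticMap.polar_smul_right]
  simp [mul_comm]

/-- The projection of a subspace of `U × F` from the vertex `(0, 1)` of a hyperbolic extension. -/
def shadow (G : Submodule F (U × F)) : Submodule F U :=
  G.map (LinearMap.fst F U F)

theorem mem_shadow {G : Submodule F (U × F)} {x : U} : x ∈ shadow G ↔ ∃ a, (x, a) ∈ G := by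
  simp [shadow]

variable {G G' : Submodule F (U × F)}

theorem eq_zero_of_fst_eq_zero (hG : ((0, 1) : U × F) ∉ G) {v : U × F} (hv : v ∈ G)
    (h : v.1 = 0) : v = 0 := by
  obtain ⟨x, a⟩ := v
  obtain rfl : x = 0 := h
  by_contra h0
  have ha : a ≠ 0 := by simpa using h0
  exact hG (by simpa [ha] using G.smul_mem a⁻¹ hv)

theorem finrank_shadow [FiniteDimensional F U] (hG : ((0, 1) : U × F) ∉ G) :
    finrank F (shadow G) = finrank F G := by
  have hker : (LinearMap.fst F U F).ker ⊓ G = ⊥ :=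
    eq_bot_iff.2 fun v hv ↦ eq_zero_of_fst_eq_zero hG hv.2 hv.1
  rw [← finrank_map_add_finrank_ker_inf (LinearMap.fst F U F) G, hker, finrank_bot, add_zero,
    shadow]

theorem finrank_le_finrank_shadow_add_one [FiniteDimensional F U] (G : Submodule F (U × F)) :
    finrank F G ≤ finrank F (shadow G) + 1 := by
  have h := finrank_map_add_finrank_ker_inf (LinearMap.fst F U F) G
  have hker : finrank F ((LinearMap.fst F U F).ker ⊓ G : Submodule F (U × F)) ≤ 1 := by
    rw [LinearMap.ker_fst]
    calc _ ≤ finrank F (LinearMap.inr F U F).range := finrank_mono inf_le_left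
      _ ≤ 1 := (LinearMap.finrank_range_le _).trans (finrank_self F).le
  rw [shadow]
  omega

theorem shadow_prod_top (hG : ((0, 1) : U × F) ∈ G) : (shadow G).prod ⊤ = G := by
  ext ⟨x, a⟩
  rw [mem_prod, mem_shadow]
  refine ⟨fun ⟨⟨b, hb⟩, _⟩ ↦ ?_, fun h ↦ ⟨⟨a, h⟩, trivial⟩⟩
  simpa using G.add_mem hb (G.smul_mem (a - b) hG)

theorem exists_forall_polar_hyperbolicExt_eq_zero {M : Submodule F U} (hM : ¬ M ≤ l.ker) {x : U}
    (hx : l x = 0) (hperp : ∀ y ∈ M, l y = 0 → QuadraticMap.polar Q x y = 0) :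
    ∃ c : F, ∀ w : U × F, w.1 ∈ M → QuadraticMap.polar (hyperbolicExt Q l) (x, c) w = 0 := by
  obtain ⟨s, hs, hls⟩ := exists_mem_apply_eq_one hM
  refine ⟨-QuadraticMap.polar Q x s, fun w hw ↦ ?_⟩
  have h := hperp (w.1 - l w.1 • s) (M.sub_mem hw (M.smul_mem _ hs)) (by simp [hls])
  rw [QuadraticMap.polar_sub_right, QuadraticMap.polar_smul_right, smul_eq_mul] at h
  rw [polar_hyperbolicExt, hx]
  linear_combination h

theorem quadNondeg_hyperbolicExt_iff :
    QuadNondeg (hyperbolicExt Q l) ↔ l ≠ 0 ∧ QuadNondeg (Q.restrict l.ker) := by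
  rw [quadNondeg_restrict_iff]
  constructor
  · intro h
    have hl : l ≠ 0 := by
      rintro rfl
      simpa using h (0, 1) (by simp) fun w ↦ by simp [polar_hyperbolicExt]
    refine ⟨hl, fun x hx hQx hp ↦ ?_⟩
    obtain ⟨c, hc⟩ := exists_forall_polar_hyperbolicExt_eq_zero (M := ⊤)
      (by rwa [top_le_iff, LinearMap.ker_eq_top]) hx fun y _ hy ↦ hp y hy
    exact congrArg Prod.fst (h (x, c) (by simpa [hQx] using .inl hx) fun w ↦ hc w trivial)
  · rintro ⟨hl, h⟩ ⟨x, a⟩ hv hp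
    have hlx : l x = 0 := by simpa [polar_hyperbolicExt] using hp (0, 1)
    have hx : x = 0 := h x hlx (by simpa [hlx] using hv) fun y hy ↦ by
      simpa [polar_hyperbolicExt, hlx, LinearMap.mem_ker.1 hy] using hp (y, 0)
    subst hx
    obtain ⟨y, hy⟩ := not_forall.1 (mt LinearMap.ext hl)
    simpa [polar_hyperbolicExt, show l y ≠ 0 from hy] using hp (y, 0)

theorem IsTotallySingular.shadow_le_ker (hG : IsTotallySingular (hyperbolicExt Q l) G)
    (hvertex : ((0, 1) : U × F) ∈ G) : shadow G ≤ l.ker := by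
  intro x hx
  obtain ⟨a, ha⟩ := mem_shadow.1 hx
  simpa [polar_hyperbolicExt] using hG.polar_eq_zero ha hvertex

theorem IsTotallySingular.ker_inf_shadow (hG : IsTotallySingular (hyperbolicExt Q l) G) :
    IsTotallySingular Q (l.ker ⊓ shadow G) := by
  rintro x ⟨hx, hxG⟩
  obtain ⟨a, ha⟩ := mem_shadow.1 hxG
  simpa [LinearMap.mem_ker.1 hx] using hG _ ha

theorem isTotallySingular_prod_top_iff {W : Submodule F U} :
    IsTotallySingular (hyperbolicExt Q l) (W.prod ⊤) ↔ IsTotallySingular Q W ∧ W ≤ l.ker := by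
  refine ⟨fun h ↦ ?_, fun ⟨hW, hWl⟩ v hv ↦ ?_⟩
  · have hQ : ∀ x ∈ W, Q x = 0 := fun x hx ↦ by simpa using h (x, 0) ⟨hx, trivial⟩
    exact ⟨hQ, fun x hx ↦ by simpa [hQ x hx] using h (x, 1) ⟨hx, trivial⟩⟩
  · simp [hW _ hv.1, LinearMap.mem_ker.1 (hWl hv.1)]

theorem IsTotallySingular.polar_fst_eq_zero (hG : IsTotallySingular (hyperbolicExt Q l) G)
    (hG' : IsTotallySingular (hyperbolicExt Q l) G') {v : U × F} (hv : v ∈ G ⊓ G')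
    (hlv : l v.1 = 0) {y : U} (hy : y ∈ shadow G ⊔ shadow G') (hly : l y = 0) :
    QuadraticMap.polar Q v.1 y = 0 := by
  rw [shadow, shadow, ← Submodule.map_sup, ← shadow] at hy
  obtain ⟨b, hb⟩ := mem_shadow.1 hy
  obtain ⟨g, hg, g', hg', hgg'⟩ := mem_sup.1 hb
  have h : QuadraticMap.polar (hyperbolicExt Q l) v (y, b) = 0 := by
    rw [← hgg', QuadraticMap.polar_add_right, hG.polar_eq_zero hv.1 hg, hG'.polar_eq_zero hv.2 hg',
      add_zero]
  simpa [polar_hyperbolicExt, hlv, hly] using h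

theorem eq_of_hyperbolicExt_eq_zero {v w : U × F} (hv : hyperbolicExt Q l v = 0)
    (hw : hyperbolicExt Q l w = 0) (h : v.1 = w.1) (hl : l v.1 ≠ 0) : v = w := by
  refine Prod.ext h (mul_left_cancel₀ hl ?_)
  rw [hyperbolicExt_apply] at hv hw
  rw [← h] at hw
  linear_combination hv - hw

theorem exists_hyperbolicExt_eq_zero {x : U} (hx : l x ≠ 0) :
    ∃ a, hyperbolicExt Q l (x, a) = 0 :=
  ⟨-(Q x / l x), by rw [hyperbolicExt_apply, mul_neg, mul_div_cancel₀ _ hx, add_neg_cancel]⟩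

theorem exists_isTotallySingular_shadow_eq {S : Submodule F U} (hS : ¬ S ≤ l.ker)
    (hSQ : IsTotallySingular Q (l.ker ⊓ S)) :
    ∃ G, IsTotallySingular (hyperbolicExt Q l) G ∧ shadow G = S := by
  obtain ⟨s, hs, hls⟩ := exists_mem_apply_eq_one hS
  /- The last coordinate must be `-Q x / l x`. Since `Q` vanishes at `x - l x • s`, the quotient
  equals `B(s, x) - l x * Q s`, which is linear in `x`. -/
  refine ⟨S.map (LinearMap.id.prod (Q s • l - Q.polarBilin s)), ?_, ?_⟩
  · rintro _ ⟨x, hx, rfl⟩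
    have hy := hSQ (x - l x • s) ⟨by simp [hls], S.sub_mem hx (S.smul_mem _ hs)⟩
    rw [sub_eq_add_neg, ← neg_smul, QuadraticMap.map_add Q, QuadraticMap.map_smul,
      QuadraticMap.polar_smul_right, QuadraticMap.polar_comm] at hy
    simp only [smul_eq_mul] at hy
    simp only [LinearMap.prod_apply, LinearMap.id_coe, Function.prod_apply, id_eq,
      LinearMap.sub_apply, LinearMap.smul_apply, smul_eq_mul, QuadraticMap.polarBilin_apply_apply,
      hyperbolicExt_apply]
    linear_combination hy
  · rw [shadow, ← Submodule.map_comp, LinearMap.fst_prod, Submodule.map_id]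

theorem IsTotallySingular.finrank_le_finrank_ker_inf_shadow_add_one [FiniteDimensional F U]
    (hG : IsTotallySingular (hyperbolicExt Q l) G) :
    finrank F G ≤ finrank F (l.ker ⊓ shadow G : Submodule F U) + 1 := by
  by_cases hvertex : ((0, 1) : U × F) ∈ G
  · rw [inf_eq_right.2 (hG.shadow_le_ker hvertex)]
    exact finrank_le_finrank_shadow_add_one G
  · rw [← finrank_shadow hvertex]
    exact finrank_le_finrank_ker_inf_add_one l _

variable [FiniteDimensional F U]

theorem wittIndex_hyperbolicExt (Q : QuadraticForm F U) (l : U →ₗ[F] F) :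
    wittIndex (hyperbolicExt Q l) = wittIndex (Q.restrict l.ker) + 1 := by
  apply le_antisymm
  · obtain ⟨G, hG⟩ := exists_isGenerator (hyperbolicExt Q l)
    rw [← hG.2]
    have := hG.1.ker_inf_shadow.finrank_le_wittIndex_restrict inf_le_left
    have := hG.1.finrank_le_finrank_ker_inf_shadow_add_one
    omega
  · obtain ⟨W, hW⟩ := exists_isGenerator (Q.restrict l.ker)
    rw [← hW.2, ← finrank_map_subtype_eq, ← finrank_prod_top]
    refine IsTotallySingular.finrank_le_wittIndex (isTotallySingular_prod_top_iff.2 ⟨?_, ?_⟩)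
    · exact isTotallySingular_comp_iff.1 hW.1
    · exact map_subtype_le _ _

theorem IsGenerator.finrank_ker_inf_shadow (hG : IsGenerator (hyperbolicExt Q l) G) :
    finrank F (l.ker ⊓ shadow G : Submodule F U) = wittIndex (Q.restrict l.ker) := by
  have := hG.1.ker_inf_shadow.finrank_le_wittIndex_restrict inf_le_left
  have := hG.1.finrank_le_finrank_ker_inf_shadow_add_one
  have := hG.2.trans (wittIndex_hyperbolicExt Q l)
  omega

theorem IsGenerator.comap_shadow (hG : IsGenerator (hyperbolicExt Q l) G) :
    IsGenerator (Q.restrict l.ker) ((shadow G).comap l.ker.subtype) :=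
  isGenerator_restrict_comap_iff.2 ⟨hG.1.ker_inf_shadow, hG.finrank_ker_inf_shadow⟩

theorem exists_isGenerator_shadow_eq {S : Submodule F U} (hS : ¬ S ≤ l.ker)
    (hSgen : IsGenerator (Q.restrict l.ker) (S.comap l.ker.subtype)) :
    ∃ G, IsGenerator (hyperbolicExt Q l) G ∧ shadow G = S := by
  rw [isGenerator_restrict_comap_iff] at hSgen
  obtain ⟨G, hG, rfl⟩ := exists_isTotallySingular_shadow_eq hS hSgen.1
  refine ⟨G, ⟨hG, ?_⟩, rfl⟩
  rw [← finrank_shadow (mt hG.shadow_le_ker hS), ← finrank_ker_inf_add_one hS, hSgen.2,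
    wittIndex_hyperbolicExt]

theorem IsGenerator.map_prod_top {W : Submodule F l.ker} (hW : IsGenerator (Q.restrict l.ker) W) :
    IsGenerator (hyperbolicExt Q l) ((W.map l.ker.subtype).prod ⊤) := by
  refine ⟨isTotallySingular_prod_top_iff.2 ⟨isTotallySingular_comp_iff.1 hW.1,
    map_subtype_le _ _⟩, ?_⟩
  rw [finrank_prod_top, finrank_map_subtype_eq, hW.2, wittIndex_hyperbolicExt]

end HyperbolicExtension

section SpreadOfAvsp

variable {F U : Type*} [Field F] [Fintype F] [AddCommGroup U] [Module F U]
  {Q : QuadraticForm F U} {l : U →ₗ[F] F} {e r : ℕ} {W : Submodule F l.ker}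
  {P : Set (Submodule F U)}

theorem IsAvsp.existsUnique_mem {H : Submodule F U} {Q : QuadraticForm F H} {W : Submodule F H}
    (h : IsAvsp e r H Q W P) {x : U} (hx : x ∉ H) : ∃! S, S ∈ P ∧ x ∈ S :=
  forall_line_existsUnique_iff.1 h.2.2.1 x hx

theorem IsAvsp.inf_eq_bot_of_shadow_mem [FiniteDimensional F U]
    (h : IsAvsp e r l.ker (Q.restrict l.ker) W P) {G G' : Submodule F (U × F)}
    (hG : IsTotallySingular (hyperbolicExt Q l) G) (hS : shadow G ∈ P)
    (hG' : IsTotallySingular (hyperbolicExt Q l) G') (hT : shadow G' ∈ P)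
    (hne : shadow G ≠ shadow G') : G ⊓ G' = ⊥ := by
  have ⟨_, hnle, _, _, _, hinf, hnondeg⟩ := h
  refine (Submodule.eq_bot_iff _).2 fun v hv ↦ ?_
  by_contra hv0
  have hx0 : v.1 ≠ 0 := fun h0 ↦
    hv0 (eq_zero_of_fst_eq_zero (mt hG.shadow_le_ker (hnle _ hS).2) hv.1 h0)
  have hx : v.1 ∈ shadow G ⊓ shadow G' := ⟨mem_shadow.2 ⟨v.2, hv.1⟩, mem_shadow.2 ⟨v.2, hv.2⟩⟩
  have hlx : l v.1 = 0 := by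
    by_contra hlx
    exact hne ((h.existsUnique_mem hlx).unique ⟨hS, hx.1⟩ ⟨hT, hx.2⟩)
  have hspan : F ∙ v.1 = shadow G ⊓ shadow G' := eq_of_le_of_finrank_le (by simpa using hx)
    (by rw [finrank_span_singleton hx0]; exact hinf _ hS _ hT hne)
  have hker : shadow G ⊓ shadow G' ≤ l.ker := by simpa [← hspan] using hlx
  have hone : finrank F ((shadow G).comap l.ker.subtype ⊓ (shadow G').comap l.ker.subtype :
      Submodule F l.ker) = 1 := by
    rw [← comap_inf, ← finrank_map_subtype_eq, map_comap_subtype, inf_eq_right.2 hker, ← hspan,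
      finrank_span_singleton hx0]
  have hx' := quadNondeg_restrict_iff.1 (hnondeg _ hS _ hT hne hone).1 ⟨v.1, hlx⟩
    (mem_sup_left (S := shadow G) hx.1) (hG.ker_inf_shadow _ ⟨hlx, hx.1⟩)
    fun y hy ↦ hG.polar_fst_eq_zero hG' hv hlx hy y.2
  exact hx0 (congrArg Subtype.val hx')

theorem IsAvsp.inf_prod_top_eq_bot (h : IsAvsp e r l.ker (Q.restrict l.ker) W P)
    {G : Submodule F (U × F)}
    (hG : IsTotallySingular (hyperbolicExt Q l) G) (hS : shadow G ∈ P) :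
    G ⊓ (W.map l.ker.subtype).prod ⊤ = ⊥ := by
  refine (Submodule.eq_bot_iff _).2 fun v ⟨hvG, hvW, _⟩ ↦
    eq_zero_of_fst_eq_zero (mt hG.shadow_le_ker (h.2.1 _ hS).2) hvG ?_
  obtain ⟨x, hx, hxv⟩ := hvW
  have hx' : x ∈ (shadow G).comap l.ker.subtype ⊓ W :=
    ⟨mem_shadow.2 ⟨v.2, by rwa [hxv]⟩, hx⟩
  rw [(h.2.2.2.1 _ hS).2, Submodule.mem_bot] at hx'
  rw [← hxv, hx', map_zero]

theorem IsAvsp.exists_isSpread_hyperbolicExt [FiniteDimensional F U]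
    (h : IsAvsp e r l.ker (Q.restrict l.ker) W P) (hl : l ≠ 0)
    (hQ : QuadNondeg (Q.restrict l.ker)) (hW : IsGenerator (Q.restrict l.ker) W)
    (hker : finrank F l.ker = 2 * wittIndex (Q.restrict l.ker) + e)
    (hr : finrank F l.ker = r + 1) : ∃ R, IsSpread (hyperbolicExt Q l) R := by
  have := Module.finite_of_finite F (M := U)
  have hlift (S : P) : ∃ G, IsGenerator (hyperbolicExt Q l) G ∧ shadow G = S :=
    exists_isGenerator_shadow_eq (h.2.1 S S.2).2 (h.2.2.2.1 S S.2).1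
  choose G hG hGS using hlift
  have hGP (S : P) : shadow (G S) ∈ P := by simp [hGS]
  let f : Option P → Submodule F (U × F)
    | none => (W.map l.ker.subtype).prod ⊤
    | some S => G S
  refine ⟨Set.range f, isSpread_range_of_natCard_eq (quadNondeg_hyperbolicExt_iff.2 ⟨hl, hQ⟩)
    (wittIndex_hyperbolicExt Q l) (e := e) ?_ ?_ ?_ ?_⟩
  · have := Module.Dual.finrank_ker_add_one_of_ne_zero hl
    rw [finrank_prod, finrank_self]
    omega
  · rw [Finite.card_option, Nat.card_coe_set_eq, h.1, Nat.card_eq_fintype_card]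
    congr 2
    omega
  · rintro (_ | S)
    exacts [hW.map_prod_top, hG S]
  · rintro (_ | S) (_ | T) hne
    · exact absurd rfl hne
    · rw [inf_comm]
      exact h.inf_prod_top_eq_bot (hG T).1 (hGP T)
    · exact h.inf_prod_top_eq_bot (hG S).1 (hGP S)
    · refine h.inf_eq_bot_of_shadow_mem (hG S).1 (hGP S) (hG T).1 (hGP T) ?_
      rw [hGS, hGS]
      exact fun heq ↦ hne (congrArg some (Subtype.ext heq))

end SpreadOfAvsp

section AvspOfSpread

variable {F U : Type*} [Field F] [AddCommGroup U] [Module F U]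
  {Q : QuadraticForm F U} {l : U →ₗ[F] F} {G G' : Submodule F (U × F)}

/-- The shadows of the members of a spread which miss the vertex `(0, 1)`. -/
def affinePartition (R : Set (Submodule F (U × F))) : Set (Submodule F U) :=
  shadow '' {G ∈ R | ((0, 1) : U × F) ∉ G}

theorem IsSpread.existsUnique_affinePartition {R : Set (Submodule F (U × F))}
    (hR : IsSpread (hyperbolicExt Q l) R) {x : U} (hx : x ∉ l.ker) :
    ∃! S, S ∈ affinePartition R ∧ x ∈ S := by
  obtain ⟨hgen, hdisj, hcov⟩ := hR
  obtain ⟨a, ha⟩ := exists_hyperbolicExt_eq_zero (Q := Q) hx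
  obtain ⟨G, hG, hxG⟩ := hcov (x, a) ha
  have hvertex : ((0, 1) : U × F) ∉ G := fun h ↦
    hx ((hgen G hG).1.shadow_le_ker h (mem_shadow.2 ⟨a, hxG⟩))
  refine ⟨shadow G, ⟨⟨G, ⟨hG, hvertex⟩, rfl⟩, mem_shadow.2 ⟨a, hxG⟩⟩, ?_⟩
  rintro _ ⟨⟨G', ⟨hG', -⟩, rfl⟩, hxG'⟩
  obtain ⟨b, hb⟩ := mem_shadow.1 hxG'
  by_contra hne
  have hmem : (x, a) ∈ G' ⊓ G :=
    ⟨eq_of_hyperbolicExt_eq_zero ha ((hgen G' hG').1 _ hb) rfl hx ▸ hb, hxG⟩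
  rw [hdisj G' hG' G hG (ne_of_apply_ne shadow hne)] at hmem
  obtain rfl : x = 0 := congrArg Prod.fst hmem
  exact hx (zero_mem _)

variable [FiniteDimensional F U]

theorem finrank_shadow_inf_shadow_add (hG : ((0, 1) : U × F) ∉ G)
    (hG' : ((0, 1) : U × F) ∉ G') (hdisj : G ⊓ G' = ⊥) :
    finrank F (shadow G ⊓ shadow G' : Submodule F U) + finrank F (shadow (G ⊔ G')) =
      finrank F (G ⊔ G' : Submodule F (U × F)) := by
  have h := finrank_sup_add_finrank_inf_eq G G'
  have h' := finrank_sup_add_finrank_inf_eq (shadow G) (shadow G')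
  rw [hdisj, finrank_bot, add_zero] at h
  rw [shadow, shadow, ← Submodule.map_sup, ← shadow, ← shadow, ← shadow, finrank_shadow hG,
    finrank_shadow hG'] at h'
  omega

theorem finrank_shadow_inf_shadow_le_one (hG : ((0, 1) : U × F) ∉ G)
    (hG' : ((0, 1) : U × F) ∉ G') (hdisj : G ⊓ G' = ⊥) :
    finrank F (shadow G ⊓ shadow G' : Submodule F U) ≤ 1 := by
  have := finrank_shadow_inf_shadow_add hG hG' hdisj
  have := finrank_le_finrank_shadow_add_one (G ⊔ G')
  omega

theorem IsGenerator.shadow_not_le_ker (hG : IsGenerator (hyperbolicExt Q l) G)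
    (hvertex : ((0, 1) : U × F) ∉ G) : ¬ shadow G ≤ l.ker := by
  refine fun hle ↦ hvertex (hG.mem_of_mem_subPerp (by simp) (mem_subPerp.2 fun g hg ↦ ?_))
  have hlg : l g.1 = 0 := hle (mem_shadow.2 ⟨g.2, hg⟩)
  simp [polar_hyperbolicExt, hlg]

theorem IsGenerator.quadNondeg_restrict_sup_shadow (hG : IsGenerator (hyperbolicExt Q l) G)
    (hG' : IsGenerator (hyperbolicExt Q l) G') (hdisj : G ⊓ G' = ⊥)
    (hsup : ((0, 1) : U × F) ∈ G ⊔ G') (hS : ¬ shadow G ≤ l.ker) :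
    QuadNondeg ((Q.restrict l.ker).restrict ((shadow G ⊔ shadow G').comap l.ker.subtype)) := by
  have hmem (w : U × F) : w ∈ G ⊔ G' ↔ w.1 ∈ shadow G ⊔ shadow G' := by
    rw [← shadow_prod_top hsup, mem_prod, shadow, Submodule.map_sup]
    simp [shadow]
  rw [quadNondeg_restrict_iff]
  rintro ⟨x, hx⟩ hxM - hp
  obtain ⟨c, hc⟩ := exists_forall_polar_hyperbolicExt_eq_zero (Q := Q)
    (fun hle ↦ hS (le_sup_left.trans hle)) hx fun y hyM hy ↦ hp ⟨y, hy⟩ hyM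
  have hxc : (x, c) ∈ (G ⊔ G') ⊓ subPerp (hyperbolicExt Q l) (G ⊔ G') :=
    ⟨(hmem _).2 hxM, mem_subPerp.2 fun w hw ↦ by
      rw [QuadraticMap.polar_comm, hc w ((hmem w).1 hw)]⟩
  rw [hG.sup_inf_subPerp_eq_bot hG' hdisj] at hxc
  exact Subtype.ext (congrArg Prod.fst hxc)

theorem IsGenerator.comap_shadow_ne_comap_shadow (hG : IsGenerator (hyperbolicExt Q l) G)
    (hvertex : ((0, 1) : U × F) ∉ G) (hvertex' : ((0, 1) : U × F) ∉ G') (hdisj : G ⊓ G' = ⊥)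
    (hk : 2 ≤ wittIndex (Q.restrict l.ker)) :
    (shadow G).comap l.ker.subtype ≠ (shadow G').comap l.ker.subtype := by
  intro heq
  have hker : l.ker ⊓ shadow G = l.ker ⊓ shadow G' := by
    rw [← map_comap_subtype, heq, map_comap_subtype]
  have hle : l.ker ⊓ shadow G ≤ shadow G ⊓ shadow G' :=
    le_inf inf_le_right (hker.le.trans inf_le_right)
  have := hG.finrank_ker_inf_shadow
  have := finrank_mono hle
  have := finrank_shadow_inf_shadow_le_one hvertex hvertex' hdisj
  omega

theorem IsGenerator.quadNondeg_and_finrank_eq_restrict_sup_shadow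
    (hG : IsGenerator (hyperbolicExt Q l) G)
    (hG' : IsGenerator (hyperbolicExt Q l) G') (hvertex : ((0, 1) : U × F) ∉ G)
    (hvertex' : ((0, 1) : U × F) ∉ G') (hdisj : G ⊓ G' = ⊥)
    (hone : finrank F ((shadow G).comap l.ker.subtype ⊓ (shadow G').comap l.ker.subtype :
      Submodule F l.ker) = 1) :
    QuadNondeg ((Q.restrict l.ker).restrict ((shadow G ⊔ shadow G').comap l.ker.subtype)) ∧
      finrank F ((shadow G ⊔ shadow G').comap l.ker.subtype) =
        2 * wittIndex
          ((Q.restrict l.ker).restrict ((shadow G ⊔ shadow G').comap l.ker.subtype)) := by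
  have hS := hG.shadow_not_le_ker hvertex
  have hinf : 1 ≤ finrank F (shadow G ⊓ shadow G' : Submodule F U) := by
    rw [← hone, ← comap_inf, ← finrank_map_subtype_eq, map_comap_subtype]
    exact finrank_mono inf_le_right
  have hadd := finrank_shadow_inf_shadow_add hvertex hvertex' hdisj
  have hsup : ((0, 1) : U × F) ∈ G ⊔ G' := by
    by_contra hnot
    have := finrank_shadow hnot
    omega
  have hnondeg := hG.quadNondeg_restrict_sup_shadow hG' hdisj hsup hS
  refine ⟨hnondeg, hnondeg.finrank_eq_two_mul_wittIndex (n := wittIndex (Q.restrict l.ker)) ?_ ?_⟩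
  · have := finrank_ker_inf_add_one fun hle ↦ hS (le_sup_left (b := shadow G').trans hle)
    have := finrank_sup_add_finrank_inf_eq (shadow G) (shadow G')
    have := finrank_shadow_inf_shadow_le_one hvertex hvertex' hdisj
    have := finrank_shadow hvertex
    have := finrank_shadow hvertex'
    have := hG.2.trans (wittIndex_hyperbolicExt Q l)
    have := hG'.2.trans (wittIndex_hyperbolicExt Q l)
    rw [← finrank_map_subtype_eq, map_comap_subtype]
    omega
  · rw [← hG.comap_shadow.2]
    exact hG.comap_shadow.1.finrank_le_wittIndex_restrict (comap_mono le_sup_left)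

theorem IsSpread.isAvsp_affinePartition [Fintype F] {R : Set (Submodule F (U × F))} {e r : ℕ}
    (hR : IsSpread (hyperbolicExt Q l) R) (hl : l ≠ 0)
    (hk : 2 ≤ wittIndex (Q.restrict l.ker))
    (hker : finrank F l.ker = 2 * wittIndex (Q.restrict l.ker) + e)
    (hr : finrank F l.ker = r + 1) (hG : G ∈ R) (hvertex : ((0, 1) : U × F) ∈ G) :
    IsAvsp e r l.ker (Q.restrict l.ker) ((shadow G).comap l.ker.subtype) (affinePartition R) := by
  have hpart : ∀ x ∉ l.ker, ∃! S, S ∈ affinePartition R ∧ x ∈ S :=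
    fun x hx ↦ hR.existsUnique_affinePartition hx
  obtain ⟨hgen, hdisj, -⟩ := hR
  have hnle : ∀ S ∈ affinePartition R, ¬ S ≤ l.ker := by
    rintro _ ⟨G, ⟨hG, hv⟩, rfl⟩
    exact (hgen G hG).shadow_not_le_ker hv
  have hdim : ∀ S ∈ affinePartition R,
      finrank F (l.ker ⊓ S : Submodule F U) = wittIndex (Q.restrict l.ker) := by
    rintro _ ⟨G, ⟨hG, -⟩, rfl⟩
    exact (hgen G hG).finrank_ker_inf_shadow
  refine ⟨?_, ?_, forall_line_existsUnique_iff.2 hpart, ?_, ?_, ?_, ?_⟩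
  · rw [ncard_of_affine_partition hl hnle hdim hpart
      (m := wittIndex (Q.restrict l.ker) + e) (by omega), Nat.card_eq_fintype_card]
    congr 1
    omega
  · refine fun S hS ↦ ⟨?_, hnle S hS⟩
    rw [← finrank_ker_inf_add_one (hnle S hS), hdim S hS]
    omega
  · rintro _ ⟨G', ⟨hG', hv'⟩, rfl⟩
    refine ⟨(hgen G' hG').comap_shadow, (Submodule.eq_bot_iff _).2 fun x hx ↦ ?_⟩
    obtain ⟨a, ha⟩ := mem_shadow.1 hx.1
    have hmem : ((x : U), a) ∈ G' ⊓ G :=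
      ⟨ha, shadow_prod_top hvertex ▸ mem_prod.2 ⟨hx.2, trivial⟩⟩
    rw [hdisj G' hG' G hG (fun h ↦ hv' (h ▸ hvertex))] at hmem
    exact Subtype.ext (congrArg Prod.fst hmem)
  · rintro _ ⟨G, ⟨hG, hv⟩, rfl⟩ _ ⟨G', ⟨hG', hv'⟩, rfl⟩ hne
    exact (hgen G hG).comap_shadow_ne_comap_shadow hv hv'
      (hdisj G hG G' hG' (ne_of_apply_ne shadow hne)) hk
  · rintro _ ⟨G, ⟨hG, hv⟩, rfl⟩ _ ⟨G', ⟨hG', hv'⟩, rfl⟩ hne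
    exact finrank_shadow_inf_shadow_le_one hv hv' (hdisj G hG G' hG' (ne_of_apply_ne shadow hne))
  · rintro _ ⟨G, ⟨hG, hv⟩, rfl⟩ _ ⟨G', ⟨hG', hv'⟩, rfl⟩ hne
    exact (hgen G hG).quadNondeg_and_finrank_eq_restrict_sup_shadow (hgen G' hG') hv hv'
      (hdisj G hG G' hG' (ne_of_apply_ne shadow hne))

end AvspOfSpread

theorem hyperbolic_avsp_dim7_iff_triality_spread_general {F U V : Type*} [Field F] [Fintype F]
    [AddCommGroup U] [Module F U] [AddCommGroup V] [Module F V] {e r : ℕ} (hr : e + 1 < r)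
    (hU : finrank F U = r + 2) (hV : finrank F V = r + 3) :
    (∃ (H : Submodule F U) (Q : QuadraticForm F H) (W : Submodule F H) (P : Set (Submodule F U)),
        finrank F H = r + 1 ∧ QuadNondeg Q ∧ finrank F H = 2 * wittIndex Q + e ∧
        IsGenerator Q W ∧ IsAvsp e r H Q W P) ↔
      ∃ Q' : QuadraticForm F V, QuadNondeg Q' ∧ finrank F V = 2 * wittIndex Q' + e ∧
        ∃ R : Set (Submodule F V), IsSpread Q' R := by
  have := Module.finite_of_finrank_eq_succ hU
  have := Module.finite_of_finrank_eq_succ hV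
  have hdim : finrank F V = finrank F U + 1 := by omega
  constructor
  · rintro ⟨H, Q, W, P, hH, hQ, hw, hW, hP⟩
    obtain ⟨l, Q₀, hl, rfl, rfl⟩ := exists_ker_eq_and_restrict_eq (by omega) Q
    obtain ⟨R, hR⟩ := hP.exists_isSpread_hyperbolicExt hl hQ hW hw hH
    let f : V ≃ₗ[F] U × F := LinearEquiv.ofFinrankEq _ _ (by simp [hdim])
    refine ⟨(hyperbolicExt Q₀ l).comp f.toLinearMap,
      (quadNondeg_hyperbolicExt_iff.2 ⟨hl, hQ⟩).comp_equiv f, ?_, _, hR.comp_equiv f⟩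
    rw [wittIndex_comp_equiv, wittIndex_hyperbolicExt]
    omega
  · rintro ⟨Q', hQ', hw, R, hR⟩
    obtain ⟨u, hu0, hu⟩ := exists_ne_zero_of_wittIndex_pos (Q := Q') (by omega)
    obtain ⟨f, hf⟩ := exists_linearEquiv_prod_apply_eq hdim hu0
    obtain ⟨Q, l, hQl⟩ := exists_eq_hyperbolicExt (Q' := Q'.comp f.toLinearMap) (by simp [hf, hu])
    have hnondeg := hQ'.comp_equiv f
    have hspread := hR.comp_equiv f
    have hw' := wittIndex_comp_equiv Q' f
    rw [hQl] at hnondeg hspread hw'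
    rw [wittIndex_hyperbolicExt] at hw'
    obtain ⟨hl, hnondeg⟩ := quadNondeg_hyperbolicExt_iff.1 hnondeg
    have hker := Module.Dual.finrank_ker_add_one_of_ne_zero hl
    obtain ⟨G, hG, hvertex⟩ := hspread.2.2 (0, 1) (by simp)
    exact ⟨l.ker, Q.restrict l.ker, _, affinePartition _, by omega, hnondeg, by omega,
      (hspread.1 G hG).comap_shadow,
      hspread.isAvsp_affinePartition hl (by omega) (by omega) (by omega) hG hvertex⟩

theorem hyperbolic_avsp_dim7_iff_triality_spread {F : Type*} [Field F] [Fintype F] :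
    (∃ (H : Submodule F (Fin 7 → F)) (Q : QuadraticForm F ↥H)
        (Pgen : Submodule F ↥H) (P : Set (Submodule F (Fin 7 → F))),
      Module.finrank F ↥H = 6 ∧ QuadNondeg Q ∧
      Module.finrank F ↥H = 2 * wittIndex Q ∧
      IsGenerator Q Pgen ∧ IsAvsp 0 5 H Q Pgen P) ↔
    (∃ Q' : QuadraticForm F (Fin 8 → F),
      QuadNondeg Q' ∧
      Module.finrank F (Fin 8 → F) = 2 * wittIndex Q' ∧
      ∃ S : Set (Submodule F (Fin 8 → F)), IsSpread Q' S) :=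
  hyperbolic_avsp_dim7_iff_triality_spread_general (e := 0) (by simp) (by simp) (by simp)
end

section
/- Let e ∈ {0,1,2}, let r ≡ e+1 (mod 2), let U be an F-vector space of dimension r+2, H a hyperplane of U, Q a nondegenerate quadratic form on H of Witt defect e, Π a generator of Q, and let P be a hyperbolic, parabolic or elliptic avsp for (U, H, Q, Π) (according as e = 0, 1 or 2). Then P is tight: the intersection of all members of P is the zero subspace; in particular, no 1-dimensional subspace of U is contained in every member of P. -/
open Module Submodule

/-!
Suppose a nonzero `v` lies in every member. Off `H` the members are disjoint, so `v ∈ H`, and the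
traces `S ⊓ H` are `q ^ (n - w)` distinct generators of `Q`, where `n = dim H` and `w` is the Witt
index, any two of which meet exactly in the line `⟨v⟩`. All of them lie in the hyperplane `v^⊥` of
`H`, so removing the common line and counting vectors gives
`q ^ (n - w) * (q ^ w - q) ≤ q ^ (n - 1) - q`. This is impossible once `w ≥ 2`, which holds because
two distinct generators share a nonzero vector.
-/

section SubspaceFamilies

variable {F V : Type*} [Field F] [AddCommGroup V] [Module F V]

theorem finrank_inf_lt_of_ne {W W' : Submodule F V} [FiniteDimensional F W]
    [FiniteDimensional F W'] (hdim : finrank F W = finrank F W') (hne : W ≠ W') :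
    finrank F ↥(W ⊓ W') < finrank F W :=
  finrank_lt_finrank_of_lt <|
    inf_le_left.lt_of_ne fun h => hne (eq_of_le_of_finrank_eq (inf_eq_left.1 h) hdim)

theorem eq_span_singleton_of_mem_of_finrank_le_one {W : Submodule F V} [FiniteDimensional F W]
    {v : V} (hv : v ≠ 0) (hvW : v ∈ W) (hW : finrank F W ≤ 1) : W = span F {v} :=
  (eq_of_le_of_finrank_le ((span_singleton_le_iff_mem v W).2 hvW)
    (by rwa [finrank_span_singleton hv])).symm

theorem ncard_coe_eq_pow_finrank (W : Submodule F V) [FiniteDimensional F W] :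
    (W : Set V).ncard = Nat.card F ^ finrank F W :=
  (Nat.card_coe_set_eq _).symm.trans natCard_eq_pow_finrank

theorem ncard_mul_pow_sub_pow_le [Finite F] [FiniteDimensional F V] {𝒲 : Set (Submodule F V)}
    {Z K : Submodule F V} {d : ℕ} (hdim : ∀ W ∈ 𝒲, finrank F W = d) (hWK : ∀ W ∈ 𝒲, W ≤ K)
    (hZK : Z ≤ K) (hinf : 𝒲.Pairwise fun W W' => W ⊓ W' ≤ Z) :
    𝒲.ncard * (Nat.card F ^ d - Nat.card F ^ finrank F Z) ≤
      Nat.card F ^ finrank F K - Nat.card F ^ finrank F Z := by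
  have : Finite V := finite_of_finite F
  have : Finite (Submodule F V) := Finite.of_injective _ SetLike.coe_injective
  lift 𝒲 to Finset (Submodule F V) using 𝒲.toFinite
  have hlarge : ∀ W ∈ 𝒲, Nat.card F ^ d - Nat.card F ^ finrank F Z ≤ ((W : Set V) \ Z).ncard :=
    fun W hW => by
      rw [← hdim W hW, ← ncard_coe_eq_pow_finrank W, ← ncard_coe_eq_pow_finrank Z]
      exact Set.le_ncard_sdiff _ _
  have hdisj : (𝒲 : Set (Submodule F V)).PairwiseDisjoint fun W => (W : Set V) \ Z :=
    fun W hW W' hW' hne =>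
      Set.disjoint_left.2 fun _ hx hx' => hx.2 (hinf hW hW' hne ⟨hx.1, hx'.1⟩)
  calc (𝒲 : Set (Submodule F V)).ncard * (Nat.card F ^ d - Nat.card F ^ finrank F Z)
      ≤ ∑ W ∈ 𝒲, ((W : Set V) \ Z).ncard := by
        rw [Set.ncard_coe_finset]
        exact Finset.card_nsmul_le_sum _ _ _ hlarge
    _ = (⋃ W ∈ (𝒲 : Set (Submodule F V)), (W : Set V) \ Z).ncard := by
        rw [𝒲.finite_toSet.ncard_biUnion (fun _ _ => Set.toFinite _) hdisj,
          finsum_mem_coe_finset]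
    _ ≤ ((K : Set V) \ Z).ncard :=
        Set.ncard_le_ncard (Set.iUnion₂_subset fun W hW => Set.sdiff_subset_sdiff_left (hWK W hW))
    _ = Nat.card F ^ finrank F K - Nat.card F ^ finrank F Z := by
        rw [Set.ncard_sdiff hZK, ncard_coe_eq_pow_finrank, ncard_coe_eq_pow_finrank]

end SubspaceFamilies

theorem pow_pred_sub_lt_pow_sub_mul {q w n : ℕ} (hq : 2 ≤ q) (hw : 2 ≤ w) (hwn : w ≤ n) :
    q ^ (n - 1) - q < q ^ (n - w) * (q ^ w - q) :=
  calc q ^ (n - 1) - q < q ^ (n - 1) := Nat.sub_lt (by positivity) (by omega)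
    _ ≤ q ^ n - q ^ (n - 1) := by
        have h : q ^ (n - 1) * 2 ≤ q ^ (n - 1) * q := Nat.mul_le_mul_left _ hq
        rw [pow_sub_one_mul (by omega)] at h
        omega
    _ ≤ q ^ n - q ^ (n - w + 1) := by gcongr <;> omega
    _ = q ^ (n - w) * (q ^ w - q) := by
        rw [Nat.mul_sub, ← pow_add, ← pow_succ, Nat.sub_add_cancel hwn]

section Generators

variable {F V : Type*} [Field F] [AddCommGroup V] [Module F V] {Q : QuadraticForm F V}

theorem IsTotallySingular.le_vecPerp {W : Submodule F V} (hW : IsTotallySingular Q W) {v : V}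
    (hv : v ∈ W) : W ≤ vecPerp Q v := fun x hx => by
  simp [vecPerp, QuadraticMap.polar, hW _ (W.add_mem hv hx), hW v hv, hW x hx]

variable [FiniteDimensional F V]

theorem QuadNondeg.finrank_vecPerp_add_one (hQ : QuadNondeg Q) {v : V} (hv : Q v = 0)
    (hv0 : v ≠ 0) : finrank F (vecPerp Q v) + 1 = finrank F V :=
  Dual.finrank_ker_add_one_of_ne_zero fun h =>
    hv0 (hQ v hv fun x => by simpa using LinearMap.congr_fun h x)

theorem QuadNondeg.sInf_eq_bot_of_pairwise_finrank_inf_le_one [Finite F] (hQ : QuadNondeg Q)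
    {𝒢 : Set (Submodule F V)} (hgen : ∀ G ∈ 𝒢, IsGenerator Q G)
    (hcard : Nat.card F ^ (finrank F V - wittIndex Q) ≤ 𝒢.ncard)
    (hinf : 𝒢.Pairwise fun G G' => finrank F ↥(G ⊓ G') ≤ 1) : sInf 𝒢 = ⊥ := by
  by_contra hne
  obtain ⟨v, hv, hv0⟩ := exists_mem_ne_zero_of_ne_bot hne
  rw [mem_sInf] at hv
  have hline : 𝒢.Pairwise fun G G' => G ⊓ G' = span F {v} := fun G hG G' hG' hGG' =>
    eq_span_singleton_of_mem_of_finrank_le_one hv0 ⟨hv G hG, hv G' hG'⟩ (hinf hG hG' hGG')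
  have hperp : ∀ G ∈ 𝒢, G ≤ vecPerp Q v := fun G hG => (hgen G hG).1.le_vecPerp (hv G hG)
  obtain ⟨G₀, hG₀⟩ : 𝒢.Nonempty :=
    Set.nonempty_of_ncard_ne_zero (hcard.trans_lt' (by simp [Nat.card_pos])).ne'
  have hspan : span F {v} ≤ vecPerp Q v :=
    (span_singleton_le_iff_mem v _).2 (hperp G₀ hG₀ (hv G₀ hG₀))
  have hdim : finrank F (vecPerp Q v) + 1 = finrank F V :=
    hQ.finrank_vecPerp_add_one ((hgen G₀ hG₀).1 v (hv G₀ hG₀)) hv0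
  have hwn : wittIndex Q < finrank F V := by
    have h := finrank_mono (hperp G₀ hG₀)
    rw [(hgen G₀ hG₀).2] at h
    omega
  have hw : 2 ≤ wittIndex Q := by
    obtain ⟨G, hG, G', hG', hGG'⟩ := (Set.one_lt_ncard_iff_nontrivial_and_finite.1 <|
      (Nat.one_lt_pow (Nat.sub_pos_of_lt hwn).ne' Finite.one_lt_card).trans_le hcard).1
    have h := finrank_inf_lt_of_ne ((hgen G hG).2.trans (hgen G' hG').2.symm) hGG'
    rwa [hline hG hG' hGG', finrank_span_singleton hv0, (hgen G hG).2] at h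
  have hcount := ncard_mul_pow_sub_pow_le (fun G hG => (hgen G hG).2) hperp hspan
    fun G hG G' hG' hGG' => (hline hG hG' hGG').le
  rw [finrank_span_singleton hv0, pow_one, Nat.eq_sub_of_add_eq hdim] at hcount
  exact (pow_pred_sub_lt_pow_sub_mul Finite.one_lt_card hw hwn.le).not_ge
    ((Nat.mul_le_mul_right _ hcard).trans hcount)

end Generators

section Avsp

variable {F U : Type*} [Field F] [AddCommGroup U] [Module F U] {H : Submodule F U}
  {Q : QuadraticForm F H} {P : Set (Submodule F U)}

namespace IsAvsp

variable [Fintype F] {e r : ℕ} {Pgen : Submodule F H}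

theorem pairwise_inf_le (hP : IsAvsp e r H Q Pgen P) : P.Pairwise fun S T => S ⊓ T ≤ H := by
  obtain ⟨-, -, hunique, -⟩ := hP
  intro S hS T hT hST v hv
  by_contra hvH
  have hv0 : v ≠ 0 := fun h => hvH (h ▸ H.zero_mem)
  have hline := hunique (span F {v}) (finrank_span_singleton hv0)
    (mt (span_singleton_le_iff_mem v H).1 hvH)
  exact hST <| hline.unique ⟨hS, (span_singleton_le_iff_mem v S).2 hv.1⟩
    ⟨hT, (span_singleton_le_iff_mem v T).2 hv.2⟩

theorem isGenerator_comap (hP : IsAvsp e r H Q Pgen P) :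
    ∀ S ∈ P, IsGenerator Q (S.comap H.subtype) := by
  obtain ⟨-, -, -, hgen, -⟩ := hP
  exact fun S hS => (hgen S hS).1

theorem injOn_comap (hP : IsAvsp e r H Q Pgen P) : P.InjOn (comap H.subtype) := by
  obtain ⟨-, -, -, -, hne, -⟩ := hP
  exact fun S hS T hT h => by_contra fun hST => hne S hS T hT hST h

theorem pairwise_finrank_inf_le_one (hP : IsAvsp e r H Q Pgen P) :
    P.Pairwise fun S T => finrank F ↥(S ⊓ T) ≤ 1 := by
  obtain ⟨-, -, -, -, -, hinf, -⟩ := hP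
  exact fun S hS T hT => hinf S hS T hT

theorem ncard_eq (hP : IsAvsp e r H Q Pgen P) (hH : finrank F H = r + 1)
    (hdef : finrank F H = 2 * wittIndex Q + e) :
    P.ncard = Nat.card F ^ (finrank F H - wittIndex Q) := by
  rw [hP.1, Fintype.card_eq_nat_card]
  congr 1
  omega

theorem nontrivial (hP : IsAvsp e r H Q Pgen P) (hH : finrank F H = r + 1)
    (hdef : finrank F H = 2 * wittIndex Q + e) : P.Nontrivial := by
  refine (Set.one_lt_ncard_iff_nontrivial_and_finite.1 ?_).1
  rw [hP.ncard_eq hH hdef]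
  exact Nat.one_lt_pow (by omega) Finite.one_lt_card

end IsAvsp

theorem avsp_is_tight_general [Finite F] [FiniteDimensional F H] (hQ : QuadNondeg Q)
    (hnt : P.Nontrivial) (hcard : Nat.card F ^ (finrank F H - wittIndex Q) ≤ P.ncard)
    (hmeet : P.Pairwise fun S T => S ⊓ T ≤ H)
    (hgen : ∀ S ∈ P, IsGenerator Q (S.comap H.subtype)) (hinj : P.InjOn (comap H.subtype))
    (hinf : P.Pairwise fun S T => finrank F ↥(S ⊓ T) ≤ 1) :
    sInf P = ⊥ ∧ ∀ L : Submodule F U, finrank F L = 1 → ∃ S ∈ P, ¬ L ≤ S := by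
  have htraces : sInf (comap H.subtype '' P) = ⊥ := by
    refine hQ.sInf_eq_bot_of_pairwise_finrank_inf_le_one (Set.forall_mem_image.2 hgen)
      (hcard.trans_eq hinj.ncard_image.symm) ?_
    refine hinj.pairwise_image.2 fun S hS T hT hST => ?_
    rw [Function.onFun, ← comap_inf, (comapSubtypeEquivOfLe (hmeet hS hT hST)).finrank_eq]
    exact hinf hS hT hST
  have hle : sInf P ≤ H := by
    obtain ⟨S, hS, T, hT, hST⟩ := hnt
    exact (le_inf (sInf_le hS) (sInf_le hT)).trans (hmeet hS hT hST)
  have hbot : sInf P = ⊥ := by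
    refine (disjoint_iff_comap_eq_bot.2 ?_).eq_bot_of_ge hle
    rw [← htraces, sInf_image, sInf_eq_iInf]
    simp only [comap_iInf]
  refine ⟨hbot, fun L hL => ?_⟩
  by_contra! hcon
  obtain rfl : L = ⊥ := le_bot_iff.1 (hbot ▸ le_sInf hcon)
  simp only [finrank_bot, zero_ne_one] at hL

end Avsp

theorem avsp_is_tight {F : Type*} [Field F] [Fintype F] (e r : ℕ)
    (he : e = 0 ∨ e = 1 ∨ e = 2) (hmod : r % 2 = (e + 1) % 2)
    (U : Type*) [AddCommGroup U] [Module F U] [FiniteDimensional F U]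
    (hU : Module.finrank F U = r + 2)
    (H : Submodule F U) (hH : Module.finrank F ↥H = r + 1)
    (Q : QuadraticForm F ↥H) (hQnd : QuadNondeg Q)
    (hdef : Module.finrank F ↥H = 2 * wittIndex Q + e)
    (Pgen : Submodule F ↥H) (hPgen : IsGenerator Q Pgen)
    (P : Set (Submodule F U)) (hP : IsAvsp e r H Q Pgen P) :
    sInf P = ⊥ ∧
    ∀ L : Submodule F U, Module.finrank F ↥L = 1 → ∃ S ∈ P, ¬ L ≤ S :=
  avsp_is_tight_general hQnd (hP.nontrivial hH hdef) (hP.ncard_eq hH hdef).ge hP.pairwise_inf_le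
    hP.isGenerator_comap hP.injOn_comap hP.pairwise_finrank_inf_le_one
end
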